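/- (Theorem 2, property 2, for g) The acceptance rate of the bidirectional acceptance sampling for the target density g equals 1/M*: P(E⁺₁ ∪ E⁻) = 1/M*. -/

import Mathlib

open MeasureTheory ProbabilityTheory Set

/-!
Whether `X` falls in `D⁻` or in `D⁺`, the pair `(X, V)` is accepted for `g` exactly when
`V * M ≤ g X / h X`, so the acceptance rate is that of classical rejection sampling: given `X = x`
the pair is accepted with probability `g x / (M * h x)`, and averaging against the proposal density
`h` leaves `∫ g / M`.
-/

theorem bidirectional_accept_union_eq {Ω K : Type*} [Field K] [LinearOrder K]
    [IsStrictOrderedRing K] {f g h : Ω → K} (u : Ω → K) (h_nonneg : ∀ ω, 0 ≤ h ω) :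
    {ω | g ω ≤ f ω ∧ u ω ≤ g ω / h ω}
        ∪ ({ω | f ω < g ω ∧ u ω ≤ f ω / h ω}
          ∪ {ω | f ω < g ω ∧ f ω / h ω < u ω ∧ u ω ≤ g ω / h ω})
      = {ω | u ω ≤ g ω / h ω} := by
  ext ω
  have ratio_le (hfg : f ω < g ω) : f ω / h ω ≤ g ω / h ω :=
    div_le_div_of_nonneg_right hfg.le (h_nonneg ω)
  simp only [mem_union, mem_ofPred_eq]
  grind

theorem volume_restrict_Icc_zero_one_Iic (t : ℝ) :
    volume.restrict (Icc 0 1) (Iic t) = ENNReal.ofReal (min 1 t) := by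
  rw [Measure.restrict_apply measurableSet_Iic, inter_comm, ← Ici_inter_Iic, inter_assoc,
    Iic_inter_Iic, Ici_inter_Iic, Real.volume_Icc, sub_zero]

theorem ofReal_mul_volume_setOf_mul_le_div {a b M : ℝ} (hM : 0 < M) (hab : a ≤ M * b) :
    ENNReal.ofReal b * volume.restrict (Icc 0 1) {v : ℝ | v * M ≤ a / b}
      = ENNReal.ofReal (a / M) := by
  have accept_eq : {v : ℝ | v * M ≤ a / b} = Iic (a / b / M) := by
    ext v
    exact (le_div_iff₀ hM).symm
  rw [accept_eq, volume_restrict_Icc_zero_one_Iic]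
  rcases le_or_gt b 0 with hb | hb
  · have ha : a ≤ 0 := hab.trans (mul_nonpos_of_nonneg_of_nonpos hM.le hb)
    rw [ENNReal.ofReal_of_nonpos hb, zero_mul,
      ENNReal.ofReal_of_nonpos (div_nonpos_of_nonpos_of_nonneg ha hM.le)]
  · have ratio_le_one : a / b / M ≤ 1 := by
      rwa [div_le_one hM, div_le_iff₀ hb]
    rw [min_eq_right ratio_le_one, ← ENNReal.ofReal_mul hb.le]
    congr 1
    field_simp

section RejectionSampling

variable {α Ω : Type*} [MeasurableSpace α] [MeasurableSpace Ω] {μ : Measure α} {P : Measure Ω}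
  {g h : α → ℝ} {M : ℝ} {X : Ω → α} {V : Ω → ℝ}

/-- The acceptance region of rejection sampling from the target density `g` with proposal density
`h` and envelope constant `M`: the proposal `x` and the uniform variate `v` give a sample when
`(x, v)` lies in this set. Where `h x = 0` the quotient is `0`, but such proposals have
probability zero. -/
def acceptRegion (g h : α → ℝ) (M : ℝ) : Set (α × ℝ) :=
  {p | p.2 * M ≤ g p.1 / h p.1}

theorem measurableSet_acceptRegion (hg : Measurable g) (hh : Measurable h) (M : ℝ) :
    MeasurableSet (acceptRegion g h M) :=
  measurableSet_le (by fun_prop) (by fun_prop)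

theorem withDensity_prod_volume_acceptRegion (hg : Measurable g) (hh : Measurable h)
    (hM : 0 < M) (hgM : ∀ᵐ x ∂μ, g x ≤ M * h x) :
    (μ.withDensity fun x ↦ ENNReal.ofReal (h x)).prod (volume.restrict (Icc 0 1))
        (acceptRegion g h M)
      = ∫⁻ x, ENNReal.ofReal (g x / M) ∂μ := by
  have accept_meas := measurableSet_acceptRegion hg hh M
  rw [Measure.prod_apply accept_meas, lintegral_withDensity_eq_lintegral_mul _ (by fun_prop)
    (measurable_measure_prodMk_left accept_meas)]
  refine lintegral_congr_ae ?_
  filter_upwards [hgM] with x hx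
  exact ofReal_mul_volume_setOf_mul_le_div hM hx

theorem measureReal_mem_acceptRegion (hg : Measurable g) (hh : Measurable h)
    (g_nonneg : 0 ≤ᵐ[μ] g) (hM : 0 < M) (hgM : ∀ᵐ x ∂μ, g x ≤ M * h x)
    (hX : HasLaw X (μ.withDensity fun x ↦ ENNReal.ofReal (h x)) P)
    (hV : HasLaw V (volume.restrict (Icc 0 1)) P) (hXV : IndepFun X V P) :
    P.real {ω | (X ω, V ω) ∈ acceptRegion g h M} = (∫ x, g x ∂μ) / M := by
  have := hV.isFiniteMeasure
  have ratio_nonneg : 0 ≤ᵐ[μ] fun x ↦ g x / M := by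
    filter_upwards [g_nonneg] with x hx
    exact div_nonneg hx hM.le
  rw [(hXV.hasLaw_prod hX hV).measureReal_eq (p := (· ∈ acceptRegion g h M))
    (measurableSet_acceptRegion hg hh M), ofPred_mem_eq, measureReal_def,
    withDensity_prod_volume_acceptRegion hg hh hM hgM,
    ← integral_eq_lintegral_of_nonneg_ae ratio_nonneg (by fun_prop), integral_div]

theorem stmt4_general (fhat : α → ℝ) (hg : Measurable g) (hh : Measurable h)
    (h_nonneg : ∀ x, 0 ≤ h x) (g_nonneg : 0 ≤ᵐ[μ] g) (hM : 0 < M)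
    (hgM : ∀ᵐ x ∂μ, g x ≤ M * h x)
    (hX : HasLaw X (μ.withDensity fun x ↦ ENNReal.ofReal (h x)) P)
    (hV : HasLaw V (volume.restrict (Icc 0 1)) P) (hXV : IndepFun X V P) :
    P.real ({ω | g (X ω) ≤ fhat (X ω) ∧ V ω * M ≤ g (X ω) / h (X ω)}
        ∪ ({ω | fhat (X ω) < g (X ω) ∧ V ω * M ≤ fhat (X ω) / h (X ω)}
          ∪ {ω | fhat (X ω) < g (X ω) ∧ fhat (X ω) / h (X ω) < V ω * M
              ∧ V ω * M ≤ g (X ω) / h (X ω)}))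
      = (∫ x, g x ∂μ) / M := by
  rw [bidirectional_accept_union_eq (fun ω ↦ V ω * M) fun ω ↦ h_nonneg (X ω)]
  exact measureReal_mem_acceptRegion hg hh g_nonneg hM hgM hX hV hXV

end RejectionSampling

theorem stmt4
    (μ : Measure ℝ) [SigmaFinite μ]
    (h g fhat : ℝ → ℝ)
    (hmeas_h : Measurable h) (hmeas_g : Measurable g) (hmeas_f : Measurable fhat)
    (h_nonneg : ∀ x, 0 ≤ h x) (g_nonneg : ∀ x, 0 ≤ g x) (f_nonneg : ∀ x, 0 ≤ fhat x)
    (h_int : ∫ x, h x ∂μ = 1) (g_int : ∫ x, g x ∂μ = 1) (f_int : ∫ x, fhat x ∂μ = 1)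
    (h_pos : ∀ x, 0 < g x + fhat x → 0 < h x)
    (Mstar : ℝ) (hM : 0 < Mstar)
    (hMf : ∀ᵐ x ∂μ, fhat x ≤ Mstar * h x)
    (hMg : ∀ᵐ x ∂μ, g x ≤ Mstar * h x)
    (Ω : Type*) [MeasurableSpace Ω] (P : Measure Ω) [IsProbabilityMeasure P]
    (X V : Ω → ℝ) (hX : Measurable X) (hV : Measurable V)
    (hXlaw : Measure.map X P = μ.withDensity (fun x => ENNReal.ofReal (h x)))
    (hVlaw : Measure.map V P = volume.restrict (Set.Icc (0:ℝ) 1))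
    (hXV : IndepFun X V P) :
    (P ({ω | g (X ω) ≤ fhat (X ω) ∧ V ω * Mstar ≤ g (X ω) / h (X ω)}
        ∪ ({ω | fhat (X ω) < g (X ω) ∧ V ω * Mstar ≤ fhat (X ω) / h (X ω)}
          ∪ {ω | fhat (X ω) < g (X ω) ∧ fhat (X ω) / h (X ω) < V ω * Mstar
              ∧ V ω * Mstar ≤ g (X ω) / h (X ω)}))).toReal
      = 1 / Mstar := by
  rw [← measureReal_def, stmt4_general fhat hmeas_g hmeas_h h_nonneg (.of_forall g_nonneg) hM hMg
    ⟨hX.aemeasurable, hXlaw⟩ ⟨hV.aemeasurable, hVlaw⟩ hXV, g_int]
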